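/- arXiv:1410.1461 — 2 statements merged into one kernel-verified Lean document; each statement's English description precedes it below -/
import Mathlib

section
/- Let a, b, a', b' be integers. If the Dehn twists D_{a,b} and D_{a',b'} of S¹ × S¹ × [0,1] are homotopic relative to the boundary S¹ × S¹ × {0,1} (i.e., there is a homotopy between them through maps that are the identity on S¹ × S¹ × {0,1}), then a = a' and b = b'. -/
/-!
STATEMENT 2: Let `a, b, a', b'` be integers. If the Dehn twists `D_{a,b}` and `D_{a',b'}`
of `S¹ × S¹ × [0,1]` are homotopic relative to the boundary `S¹ × S¹ × {0,1}`
(homotopic through maps that agree with the identity on the boundary), then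
`a = a'` and `b = b'`.
-/

open unitInterval

/-- The Dehn twist `D_{a,b}(z,w,t) = (e^{2πiat}·z, e^{2πibt}·w, t)` of the
thickened torus `S¹ × S¹ × [0,1]`, as a continuous map. -/
noncomputable def dehnTwist (a b : ℤ) : C(Circle × Circle × I, Circle × Circle × I) :=
  ⟨fun p => (Circle.exp (2 * Real.pi * (a : ℝ) * (p.2.2 : ℝ)) * p.1,
             Circle.exp (2 * Real.pi * (b : ℝ) * (p.2.2 : ℝ)) * p.2.1,
             p.2.2), by fun_prop⟩

/-- The boundary `S¹ × S¹ × {0,1}` of the thickened torus. -/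
def torusBoundary : Set (Circle × Circle × I) := {p | p.2.2 = 0 ∨ p.2.2 = 1}

/-!
Dividing a component of `D_{a,b}` by the corresponding coordinate leaves the circle-valued map
`(z, w, t) ↦ e^{2πiat}`, and likewise for `D_{a',b'}`. A homotopy between the quotients relative to
a set `S` lifts through the covering `ℝ → S¹` to one between the angles `2πat` and `2πa't + 2πm`,
for some integer `m`. The lifted homotopy is still fixed over `S`, so `at` and `a't + m` agree at
every height `t` occurring in `S`; two different heights force `a = a'`.
-/

theorem homotopicRel_div {X G : Type*} [TopologicalSpace X] [TopologicalSpace G] [Div G]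
    [ContinuousDiv G] {f₀ f₁ g₀ g₁ : C(X, G)} {S : Set X}
    (hf : f₀.HomotopicRel f₁ S) (hg : g₀.HomotopicRel g₁ S) :
    (f₀ / g₀).HomotopicRel (f₁ / g₁) S :=
  have pair : (f₀.prodMk g₀).HomotopicRel (f₁.prodMk g₁) S :=
    hf.map2 ContinuousMap.HomotopyRel.prod hg
  pair.comp_continuousMap ⟨fun x : G × G => x.1 / x.2, by fun_prop⟩

section Angle

variable {X : Type*} [TopologicalSpace X] [PreconnectedSpace X] {S : Set X} {x y : X}

theorem sub_eq_sub_of_homotopicRel_exp {φ ψ : C(X, ℝ)}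
    (h : (Circle.exp.comp φ).HomotopicRel (Circle.exp.comp ψ) S) (hx : x ∈ S) (hy : y ∈ S) :
    φ x - φ y = ψ x - ψ y := by
  obtain ⟨m, hm⟩ : ∃ m : ℤ, φ y = ψ y + m * (2 * Real.pi) :=
    Circle.exp_eq_exp.mp (h.fst_eq_snd hy)
  let ψ' : C(X, ℝ) := ψ + .const X (m * (2 * Real.pi))
  have exp_comp_ψ' : Circle.exp.comp ψ' = Circle.exp.comp ψ :=
    ContinuousMap.ext fun z => Circle.exp_eq_exp.mpr ⟨m, rfl⟩
  have lifted : φ.HomotopicRel ψ' S :=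
    (Circle.isCoveringMap_exp.homotopicRel_iff_comp ⟨y, hy, hm⟩).mpr (exp_comp_ψ' ▸ h)
  have hx' : φ x = ψ x + m * (2 * Real.pi) := lifted.fst_eq_snd hx
  linarith

theorem sub_eq_sub_of_homotopicRel_exp_mul {φ ψ : C(X, ℝ)} {u : C(X, Circle)}
    (h : (Circle.exp.comp φ * u).HomotopicRel (Circle.exp.comp ψ * u) S)
    (hx : x ∈ S) (hy : y ∈ S) : φ x - φ y = ψ x - ψ y := by
  have quotients := homotopicRel_div h (.refl u)
  rw [mul_div_cancel_right, mul_div_cancel_right] at quotients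
  exact sub_eq_sub_of_homotopicRel_exp quotients hx hy

end Angle

/-- The angle `2πat` through which a Dehn twist with coefficient `a` rotates a circle factor at
height `t`; it is real-valued, hence a lift of the rotation through `Circle.exp`. -/
noncomputable def twistAngle (a : ℤ) : C(Circle × Circle × I, ℝ) :=
  ⟨fun p => 2 * Real.pi * (a : ℝ) * (p.2.2 : ℝ), by fun_prop⟩

theorem eq_of_twistAngle_sub_eq {a a' : ℤ} {p q : Circle × Circle × I} (hpq : p.2.2 ≠ q.2.2)
    (h : twistAngle a p - twistAngle a q = twistAngle a' p - twistAngle a' q) : a = a' := by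
  have height_ne : (p.2.2 : ℝ) - q.2.2 ≠ 0 := sub_ne_zero.mpr (Subtype.coe_injective.ne hpq)
  have scaled : 2 * Real.pi * (p.2.2 - q.2.2 : ℝ) * a = 2 * Real.pi * (p.2.2 - q.2.2 : ℝ) * a' := by
    simp only [twistAngle, ContinuousMap.coe_mk] at h
    linarith
  exact_mod_cast mul_left_cancel₀ (mul_ne_zero Real.two_pi_pos.ne' height_ne) scaled

theorem dehnTwist_homotopicRel_inj_general {a b a' b' : ℤ} {S : Set (Circle × Circle × I)}
    {p q : Circle × Circle × I} (hp : p ∈ S) (hq : q ∈ S) (hpq : p.2.2 ≠ q.2.2)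
    (h : (dehnTwist a b).HomotopicRel (dehnTwist a' b') S) :
    a = a' ∧ b = b' := by
  have fst_homotopic : (Circle.exp.comp (twistAngle a) * .fst).HomotopicRel
      (Circle.exp.comp (twistAngle a') * .fst) S :=
    h.comp_continuousMap .fst
  have snd_homotopic : (Circle.exp.comp (twistAngle b) * .comp .fst .snd).HomotopicRel
      (Circle.exp.comp (twistAngle b') * .comp .fst .snd) S :=
    h.comp_continuousMap (.comp .fst .snd)
  exact ⟨eq_of_twistAngle_sub_eq hpq (sub_eq_sub_of_homotopicRel_exp_mul fst_homotopic hp hq),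
    eq_of_twistAngle_sub_eq hpq (sub_eq_sub_of_homotopicRel_exp_mul snd_homotopic hp hq)⟩

theorem dehnTwist_homotopicRel_inj (a b a' b' : ℤ)
    (h : (dehnTwist a b).HomotopicRel (dehnTwist a' b') torusBoundary) :
    a = a' ∧ b = b' :=
  dehnTwist_homotopicRel_inj_general (p := (1, 1, 0)) (q := (1, 1, 1))
    (Or.inl rfl) (Or.inr rfl) zero_ne_one h
end

section
/- Every continuous map G : S¹ × S¹ × [0,1] → S¹ × S¹ × [0,1] whose restriction to the boundary S¹ × S¹ × {0,1} is the identity is homotopic, relative to S¹ × S¹ × {0,1}, to the Dehn twist D_{a,b} for some integers a and b. -/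
/-!
STATEMENT 3: Every continuous map `G : S¹ × S¹ × [0,1] → S¹ × S¹ × [0,1]` whose
restriction to the boundary `S¹ × S¹ × {0,1}` is the identity is homotopic, relative
to `S¹ × S¹ × {0,1}`, to the Dehn twist `D_{a,b}` for some integers `a` and `b`.
-/

open unitInterval

/-!
Two circle-valued maps on `[0,1] × A`, with `A` connected, that agree at both ends have a quotient
which is `1` there. Lift the quotient to `ℝ`, starting from `0`; the lift is a constant `2πn` at
`t = 1`, so the straight-line homotopy to `2πnt` is fixed at both ends. Applied to the two circle
coordinates of `G` and of the identity, this produces the integers `a` and `b`, while the interval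
coordinate of `G` deforms to `t` along straight lines.
-/

open ContinuousMap Set

section Homotopy

variable {X Y Z : Type*} [TopologicalSpace X] [TopologicalSpace Y] [TopologicalSpace Z]

theorem homotopicRel_comp_right {f₀ f₁ : C(Y, Z)} {S : Set Y} (h : f₀.HomotopicRel f₁ S)
    (g : C(X, Y)) : (f₀.comp g).HomotopicRel (f₁.comp g) (g ⁻¹' S) :=
  h.map fun F => ⟨.comp F.toHomotopy (.refl g), fun t x hx => F.prop t (g x) hx⟩

theorem homotopicRel_prodMk {f₀ f₁ : C(X, Y)} {g₀ g₁ : C(X, Z)} {S : Set X}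
    (hf : f₀.HomotopicRel f₁ S) (hg : g₀.HomotopicRel g₁ S) :
    (f₀.prodMk g₀).HomotopicRel (f₁.prodMk g₁) S :=
  hf.map2 .prod hg

theorem homotopicRel_mul {M : Type*} [TopologicalSpace M] [Mul M] [ContinuousMul M]
    {f₀ f₁ g₀ g₁ : C(X, M)} {S : Set X} (hf : f₀.HomotopicRel f₁ S) (hg : g₀.HomotopicRel g₁ S) :
    (f₀ * g₀).HomotopicRel (f₁ * g₁) S :=
  (homotopicRel_prodMk hf hg).comp_continuousMap ⟨fun p : M × M => p.1 * p.2, by fun_prop⟩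

variable {E : Type*} [AddCommGroup E] [TopologicalSpace E] [IsTopologicalAddGroup E]
  [Module ℝ E] [ContinuousSMul ℝ E] {S : Set X}

theorem homotopicRel_of_eqOn {f g : C(X, E)} (h : EqOn f g S) : f.HomotopicRel g S :=
  ⟨.affine f g, fun t x hx => by simp [← h hx]⟩

theorem homotopicRel_of_eqOn_of_convex {s : Set E} (hs : Convex ℝ s) {f g : C(X, s)}
    (h : EqOn f g S) : f.HomotopicRel g S := by
  let ι : C(s, E) := ⟨Subtype.val, continuous_subtype_val⟩
  let F := Homotopy.affine (ι.comp f) (ι.comp g)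
  have hF (p : I × X) : F p ∈ s := hs.lineMap_mem (f p.2).2 (g p.2).2 p.1.2
  exact ⟨⟨⟨⟨fun p => ⟨F p, hF p⟩, by fun_prop⟩, by simp [F, ι], by simp [F, ι]⟩,
    fun t x hx => by simp [F, ι, ← h hx]⟩⟩

end Homotopy

theorem exists_lift_eq_const_on_ends {E B A : Type*} [TopologicalSpace E] [TopologicalSpace B]
    [TopologicalSpace A] [ConnectedSpace A] {p : E → B} (hp : IsCoveringMap p) (H : C(I × A, B))
    {e : E} {b : B} (H_zero : ∀ a, H (0, a) = p e) (H_one : ∀ a, H (1, a) = b) :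
    ∃ (L : C(I × A, E)) (e' : E), p ∘ L = H ∧ p e' = b ∧
      (∀ a, L (0, a) = e) ∧ ∀ a, L (1, a) = e' := by
  let L := hp.liftHomotopy H (.const A e) H_zero
  have L_lifts : p ∘ L = H := hp.liftHomotopy_lifts ..
  have L_one (a : A) : p (L (1, a)) = b := (congr_fun L_lifts (1, a)).trans (H_one a)
  obtain ⟨a₀⟩ := ‹ConnectedSpace A›.toNonempty
  exact ⟨L, L (1, a₀), L_lifts, L_one a₀, hp.liftHomotopy_zero H _ H_zero, fun a =>
    hp.const_of_comp (by fun_prop) (fun a a' => (L_one a).trans (L_one a').symm) a a₀⟩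

theorem exists_homotopicRel_exp_mul {A : Type*} [TopologicalSpace A] [ConnectedSpace A]
    {f g : C(I × A, Circle)} (h : EqOn f g ({0, 1} ×ˢ univ)) :
    ∃ n : ℤ, f.HomotopicRel ⟨fun p => Circle.exp (2 * Real.pi * n * p.1) * g p, by fun_prop⟩
      ({0, 1} ×ˢ univ) := by
  have h_div (t : I) (ht : t ∈ ({0, 1} : Set I)) (a : A) : (f / g) (t, a) = 1 :=
    div_eq_one.2 (h ⟨ht, mem_univ a⟩)
  obtain ⟨L, y, L_lifts, hy, L_zero, L_one⟩ := exists_lift_eq_const_on_ends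
    Circle.isCoveringMap_exp (f / g) (e := 0) (b := 1)
    (fun a => by rw [h_div 0 (by simp), Circle.exp_zero]) (h_div 1 (by simp))
  obtain ⟨n, rfl⟩ := Circle.exp_eq_one.1 hy
  let linear : C(I × A, ℝ) := ⟨fun p => 2 * Real.pi * n * p.1, by fun_prop⟩
  have L_linear : L.HomotopicRel linear ({0, 1} ×ˢ univ) := homotopicRel_of_eqOn <| by
    rintro ⟨t, a⟩ ⟨rfl | rfl, -⟩
    · simp [linear, L_zero]
    · simp [linear, L_one, mul_comm]
  have f_eq : Circle.exp.comp L * g = f := by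
    ext1 p
    exact (congr_arg (· * g p) (congr_fun L_lifts p)).trans (div_mul_cancel (f p) (g p))
  exact ⟨n, f_eq ▸ homotopicRel_mul (L_linear.comp_continuousMap Circle.exp) (.refl g)⟩

theorem exists_homotopicRel_torusBoundary_exp_mul {f g : C(Circle × Circle × I, Circle)}
    (h : EqOn f g torusBoundary) :
    ∃ n : ℤ, f.HomotopicRel ⟨fun p => Circle.exp (2 * Real.pi * n * p.2.2) * g p, by fun_prop⟩
      torusBoundary := by
  let rotate : C(Circle × Circle × I, I × Circle × Circle) :=
    ⟨fun p => (p.2.2, p.1, p.2.1), by fun_prop⟩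
  let unrotate : C(I × Circle × Circle, Circle × Circle × I) :=
    ⟨fun q => (q.2.1, q.2.2, q.1), by fun_prop⟩
  have preimage_rotate : rotate ⁻¹' ({0, 1} ×ˢ univ) = torusBoundary :=
    ext fun _ => and_iff_left (mem_univ _)
  have h_unrotate : EqOn (f.comp unrotate) (g.comp unrotate) ({0, 1} ×ˢ univ) :=
    fun _ hq => h hq.1
  obtain ⟨n, hn⟩ := exists_homotopicRel_exp_mul h_unrotate
  exact ⟨n, preimage_rotate ▸ homotopicRel_comp_right hn rotate⟩

theorem homotopicRel_dehnTwist (G : C(Circle × Circle × I, Circle × Circle × I))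
    (hG : ∀ p ∈ torusBoundary, G p = p) :
    ∃ a b : ℤ, G.HomotopicRel (dehnTwist a b) torusBoundary := by
  obtain ⟨a, ha⟩ := exists_homotopicRel_torusBoundary_exp_mul
    (f := fst.comp G) (g := fst) fun p hp => congr_arg Prod.fst (hG p hp)
  obtain ⟨b, hb⟩ := exists_homotopicRel_torusBoundary_exp_mul
    (f := fst.comp (snd.comp G)) (g := fst.comp snd) fun p hp => congr_arg (·.2.1) (hG p hp)
  have ht : (snd.comp (snd.comp G)).HomotopicRel (snd.comp snd) torusBoundary :=
    homotopicRel_of_eqOn_of_convex (convex_Icc 0 1) fun p hp => congr_arg (·.2.2) (hG p hp)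
  exact ⟨a, b, homotopicRel_prodMk ha (homotopicRel_prodMk hb ht)⟩
end
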